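/- arXiv:1810.05498 — 6 statements merged into one kernel-verified Lean document; each statement's English description precedes it below -/
import Mathlib

section
/- Let E be a lattice effect algebra and define x·y := ((x'∧y)⊕y')' for all x,y ∈ E. Then for all a, b ∈ E: a ≤ b (in the induced order) if and only if a·b' = 0. -/
/-- An effect algebra: a partial algebra (E;⊕,',0,1). The partial operation ⊕ is
modeled by a definedness predicate `D` together with a total function `add` whose
value is only meaningful on defined pairs. -/
structure EffectAlgebra (E : Type*) where
  /-- definedness of `x ⊕ y` -/
  D : E → E → Prop
  /-- the value of `x ⊕ y` (meaningful only when `D x y`) -/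
  add : E → E → E
  zero : E
  one : E
  /-- the complement `x'` -/
  compl : E → E
  /-- (E1) commutativity -/
  E1 : ∀ x y, D x y → D y x ∧ add x y = add y x
  /-- (E2) associativity -/
  E2 : ∀ x y z, D x y → D (add x y) z →
    D y z ∧ D x (add y z) ∧ add (add x y) z = add x (add y z)
  /-- (E3) existence of the complement -/
  E3a : ∀ x, D x (compl x)
  E3b : ∀ x, add x (compl x) = one
  /-- (E3) uniqueness of the complement -/
  E3c : ∀ x y, D x y → add x y = one → y = compl x
  /-- (E4) -/
  E4 : ∀ x, D x one → x = zero

/-- The induced order of an effect algebra: `a ≤ b` iff `a ⊕ c = b` for some `c`. -/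
def EffectAlgebra.le {E : Type*} (A : EffectAlgebra E) (a b : E) : Prop :=
  ∃ c, A.D a c ∧ A.add a c = b

/-- A lattice effect algebra: an effect algebra whose induced order is a lattice,
with meet `inf` and join `sup`. -/
structure LatticeEffectAlgebra (E : Type*) extends EffectAlgebra E where
  inf : E → E → E
  sup : E → E → E
  inf_le_left : ∀ a b, toEffectAlgebra.le (inf a b) a
  inf_le_right : ∀ a b, toEffectAlgebra.le (inf a b) b
  le_inf : ∀ a b c, toEffectAlgebra.le c a → toEffectAlgebra.le c b →
    toEffectAlgebra.le c (inf a b)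
  le_sup_left : ∀ a b, toEffectAlgebra.le a (sup a b)
  le_sup_right : ∀ a b, toEffectAlgebra.le b (sup a b)
  sup_le : ∀ a b c, toEffectAlgebra.le a c → toEffectAlgebra.le b c →
    toEffectAlgebra.le (sup a b) c

/-- The total operation `x·y := ((x'∧y)⊕y')'` on a lattice effect algebra
(well defined since `x'∧y ≤ y`). -/
def LatticeEffectAlgebra.prod {E : Type*} (A : LatticeEffectAlgebra E) (x y : E) : E :=
  A.compl (A.add (A.inf (A.compl x) y) (A.compl y))


namespace EffectAlgebra

variable {E : Type*} (A : EffectAlgebra E)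

theorem compl_compl (x : E) : A.compl (A.compl x) = x := by
  have h := A.E1 _ _ (A.E3a x)
  exact (A.E3c _ _ h.1 (h.2 ▸ A.E3b x)).symm

theorem compl_one : A.compl A.one = A.zero :=
  A.E4 _ (A.E1 _ _ (A.E3a A.one)).1

theorem compl_zero : A.compl A.zero = A.one := by
  rw [← A.compl_one, A.compl_compl]

theorem add_zero (x : E) : A.add x A.zero = x := by
  have hx := A.E1 _ _ (A.E3a x)
  have h1 : A.add (A.compl x) x = A.one := hx.2 ▸ A.E3b x
  have hD : A.D (A.add (A.compl x) x) A.zero := by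
    rw [h1, ← A.compl_one]
    exact A.E3a _
  obtain ⟨-, hD', h⟩ := A.E2 _ _ _ hx.1 hD
  have h2 : A.add (A.compl x) (A.add x A.zero) = A.one := by
    rw [← h, h1, ← A.compl_one]
    exact A.E3b _
  rw [A.E3c _ _ hD' h2, A.compl_compl]

variable {A} {x y : E}

theorem le.compl (h : A.le x y) : A.le (A.compl y) (A.compl x) := by
  obtain ⟨c, hc, rfl⟩ := h
  obtain ⟨h1, h2, h3⟩ := A.E2 _ _ _ hc (A.E3a _)
  have h4 := A.E1 _ _ h1
  exact ⟨c, h4.1, h4.2 ▸ A.E3c _ _ h2 (h3 ▸ A.E3b _)⟩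

theorem le.refl (x : E) : A.le x x := by
  refine ⟨A.zero, ?_, A.add_zero x⟩
  have hx := A.E1 _ _ (A.E3a x)
  refine (A.E2 (A.compl x) x A.zero hx.1 ?_).1
  rw [← hx.2, A.E3b, ← A.compl_one]
  exact A.E3a _

theorem le.defined_compl (h : A.le x y) : A.D x (A.compl y) := by
  obtain ⟨c, hc, rfl⟩ := h
  have h := A.E1 _ _ hc
  exact (A.E2 c x _ h.1 (h.2 ▸ A.E3a (A.add x c))).1

theorem le.antisymm (hxy : A.le x y) (hyx : A.le y x) : x = y := by
  have hD := hyx.defined_compl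
  obtain ⟨c, hc, rfl⟩ := hxy
  have h := A.E1 _ _ hc
  rw [h.2] at hD
  have hc0 : c = A.zero := A.E4 _ (A.E3b x ▸ (A.E2 _ _ _ h.1 hD).2.1)
  rw [hc0, A.add_zero]

end EffectAlgebra

/-- In a lattice effect algebra with `x·y := ((x'∧y)⊕y')'`, one has
`a ≤ b` (in the induced order) iff `a·b' = 0`. -/
theorem le_iff_prod_compl_eq_zero {E : Type*} (A : LatticeEffectAlgebra E) (a b : E) :
    A.toEffectAlgebra.le a b ↔ A.prod a (A.compl b) = A.zero := by
  have hm := A.inf_le_right (A.compl a) (A.compl b)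
  have hD := hm.defined_compl
  rw [A.compl_compl] at hD
  have hprod : A.prod a (A.compl b) =
      A.compl (A.add (A.inf (A.compl a) (A.compl b)) b) := by
    rw [LatticeEffectAlgebra.prod, A.compl_compl]
  have hb := A.E1 _ _ hD
  rw [hprod, hb.2]
  constructor
  · intro h
    rw [hm.antisymm (A.le_inf _ _ _ h.compl (.refl _)), A.E3b, A.compl_one]
  · intro h
    have h1 : A.add b (A.inf (A.compl a) (A.compl b)) = A.one := by
      rw [← A.compl_zero, ← h, A.compl_compl]
    have h2 := A.inf_le_left (A.compl a) (A.compl b)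
    rw [A.E3c _ _ hb.1 h1] at h2
    simpa only [A.compl_compl] using h2.compl
end

section
/- Let R = (R;·,',0,1) be an effect groupoid and let a, b ∈ R. If a·b = 0, then b·a = 0 and a'·b' = b'·a'. -/
/-- An effect groupoid: an algebra (R;·,',0,1) of type (2,1,0,0) satisfying
(NG0)–(NG8). -/
structure EffectGroupoid (R : Type*) where
  mul : R → R → R
  compl : R → R
  zero : R
  one : R
  /-- (NG0) -/
  ng0l : ∀ x, mul one x = x
  ng0r : ∀ x, mul x one = x
  /-- (NG1) -/
  ng1 : ∀ x, compl (compl x) = x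
  /-- (NG2) -/
  ng2l : ∀ x, mul zero x = zero
  ng2r : ∀ x, mul x zero = zero
  /-- (NG3) -/
  ng3 : compl zero = one
  /-- (NG4) -/
  ng4l : ∀ x y, mul x (mul y (compl x)) = zero
  ng4r : ∀ x y, mul (mul y (compl x)) x = zero
  /-- (NG5) -/
  ng5 : ∀ x y, mul x y =
    mul y (compl (mul (compl (mul (compl y) (compl x))) (compl x)))
  /-- (NG6) -/
  ng6a : ∀ x y, mul x (compl (mul (compl y) x)) = mul (compl (mul (compl y) x)) x
  ng6b : ∀ x y, mul (compl (mul (compl y) x)) x = mul (compl (mul (compl x) y)) y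
  /-- (NG7) -/
  ng7 : ∀ x y z,
    mul (compl (mul (compl (mul x (compl y))) (compl y))) z =
    compl (mul (compl (mul (mul x z) (compl (mul y z)))) (compl (mul y z)))
  /-- (NG8) -/
  ng8 : ∀ x y z, mul (compl x) (compl y) = zero →
    mul (compl (mul x y)) (compl z) = zero →
    mul (compl y) (compl z) = zero ∧
    mul (compl x) (compl (mul y z)) = zero ∧
    mul (mul x y) z = mul x (mul y z)

/-- In an effect groupoid, if `a·b = 0` then `b·a = 0` and `a'·b' = b'·a'`. -/
theorem mul_eq_zero_symm {R : Type*} (G : EffectGroupoid R) (a b : R)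
    (h : G.mul a b = G.zero) :
    G.mul b a = G.zero ∧
    G.mul (G.compl a) (G.compl b) = G.mul (G.compl b) (G.compl a) := by
  -- `a · b = 0` makes `b` a multiple of `a'`.
  have hb : G.mul (G.compl (G.mul (G.compl b) (G.compl a))) (G.compl a) = b := by
    rw [G.ng6b (G.compl a) b, G.ng1, h, G.ng3, G.ng0l]
  have hba : G.mul b a = G.zero := by
    simpa only [hb] using G.ng4r a (G.compl (G.mul (G.compl b) (G.compl a)))
  refine ⟨hba, ?_⟩
  rw [G.ng5 (G.compl a) (G.compl b), G.ng1, G.ng1, hba, G.ng3, G.ng0l]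
end

section
/- Let R = (R;·,',0,1) be an effect groupoid and let a, b ∈ R. If a·b = 0 and (a'·b')' = 1, then b = a'. Moreover, for every a ∈ R: a·a' = 0 and (a'·a'')' = 1, i.e., a⊕a' exists and equals 1 (so a' is the unique complement of a with respect to the partial operation x⊕y := (x'·y')' defined when x·y = 0). -/
/-- In an effect groupoid: if `a·b = 0` and `(a'·b')' = 1` then `b = a'`; moreover
`a·a' = 0` and `(a'·a'')' = 1`, i.e. `a⊕a'` exists and equals `1`. -/
theorem compl_unique_and_exists {R : Type*} (G : EffectGroupoid R) (a b : R) :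
    (G.mul a b = G.zero → G.compl (G.mul (G.compl a) (G.compl b)) = G.one → b = G.compl a) ∧
    G.mul a (G.compl a) = G.zero ∧
    G.compl (G.mul (G.compl a) (G.compl (G.compl a))) = G.one := by
  have compl_one : G.compl G.one = G.zero := by rw [← G.ng3, G.ng1]
  have mul_compl (x : R) : G.mul x (G.compl x) = G.zero := by
    simpa only [G.ng0l] using G.ng4l x G.one
  refine ⟨fun hab h => ?_, mul_compl a, by rw [mul_compl, G.ng3]⟩
  have hc : G.mul (G.compl a) (G.compl b) = G.zero := by rw [← G.ng1 (G.mul _ _), h, compl_one]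
  have hc' : G.mul (G.compl b) (G.compl a) = G.zero := by
    rw [G.ng5, G.ng1, G.ng1, hab, G.ng3, G.ng0l, hc]
  simpa only [G.ng1, hab, hc', G.ng3, G.ng0l] using G.ng6b b (G.compl a)
end

section
/- Let R = (R;·,',0,1) be an effect groupoid and define the partial operation x⊕y := (x'·y')' whenever x·y = 0 (undefined otherwise). Then 𝔼(R) := (R;⊕,',0,1) is a lattice effect algebra: it satisfies the effect algebra axioms (E1)–(E4), and its induced order (a ≤ b iff a⊕c = b for some c, equivalently a·b' = 0) is a lattice order. -/
namespace EffectGroupoid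

variable {R : Type*} (G : EffectGroupoid R)

/-- The join `x ∨ y = ((x·y')'·y')'` of an effect groupoid. -/
def join (x y : R) : R :=
  G.compl (G.mul (G.compl (G.mul x (G.compl y))) (G.compl y))

/-- The relation `x ≤ y`, that is `x·y' = 0`. -/
def Le (x y : R) : Prop := G.mul x (G.compl y) = G.zero

theorem compl_one : G.compl G.one = G.zero := by
  rw [← G.ng3, G.ng1]

theorem compl_inj {x y : R} (h : G.compl x = G.compl y) : x = y := by
  rw [← G.ng1 x, h, G.ng1]

theorem mul_compl_self (x : R) : G.mul x (G.compl x) = G.zero := by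
  simpa only [G.ng0l] using G.ng4l x G.one

theorem compl_mul_self (x : R) : G.mul (G.compl x) x = G.zero := by
  simpa only [G.ng0l] using G.ng4r x G.one

theorem join_comm (x y : R) : G.join x y = G.join y x := by
  have h := G.ng6b (G.compl y) (G.compl x)
  rw [G.ng1, G.ng1] at h
  exact congrArg G.compl h

theorem join_eq_right {x y : R} (h : G.Le x y) : G.join x y = y := by
  unfold Le at h
  rw [join, h, G.ng3, G.ng0l, G.ng1]

theorem eq_zero_of_compl_mul_compl {b c : R} (hcb : G.mul c b = G.zero)
    (h : G.mul (G.compl c) (G.compl b) = G.compl b) : c = G.zero := by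
  have h8 := (G.ng8 (G.compl c) (G.compl b) b (by rw [G.ng1, G.ng1, hcb])
    (by rw [h, G.ng1, G.mul_compl_self])).2.1
  rwa [G.compl_mul_self, G.ng1, G.ng3, G.ng0r] at h8

theorem Le.antisymm {x y : R} (h : G.Le x y) (h' : G.Le y x) : x = y := by
  rw [← G.join_eq_right h, G.join_comm, G.join_eq_right h']

theorem mul_eq_zero_symm {x y : R} (h : G.mul x y = G.zero) : G.mul y x = G.zero := by
  have h8 := (G.ng8 (G.compl x) (G.compl y) (G.compl (G.mul (G.compl x) (G.compl y)))
    (by rw [G.ng1, G.ng1, h]) (by rw [G.ng1, G.compl_mul_self])).2.1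
  rw [G.ng1, G.ng6a] at h8
  have h6 := G.ng6b (G.compl y) x
  rw [G.ng1] at h6
  rw [h6] at h8
  have hle : G.Le (G.mul (G.compl (G.mul y x)) x) x := by
    have := G.ng4r (G.compl x) (G.compl (G.mul y x))
    rwa [G.ng1] at this
  have heq := Le.antisymm G hle h8
  apply G.eq_zero_of_compl_mul_compl (b := G.compl x)
  · have := G.ng4r (G.compl x) y
    rwa [G.ng1] at this
  · rwa [G.ng1]

theorem Le.compl {x y : R} (h : G.Le x y) : G.Le (G.compl y) (G.compl x) := by
  unfold Le
  rw [G.ng1]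
  exact G.mul_eq_zero_symm h

theorem le_compl_of_mul_eq_zero {x y : R} (h : G.mul x y = G.zero) : G.Le x (G.compl y) := by
  rw [Le, G.ng1, h]

theorem le_join_right (x y : R) : G.Le y (G.join x y) := by
  rw [Le, join, G.ng1]
  exact G.ng4l _ _

theorem le_join_left (x y : R) : G.Le x (G.join x y) := by
  rw [G.join_comm]
  exact G.le_join_right _ _

theorem join_le {x y z : R} (hx : G.Le x z) (hy : G.Le y z) : G.Le (G.join x y) z := by
  unfold Le at *
  rw [join, G.ng7, hx, hy, G.ng3, G.ng0r, G.ng0r, G.ng3, G.compl_one]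

theorem mul_compl_comm {x y : R} (h : G.mul x y = G.zero) :
    G.mul (G.compl x) (G.compl y) = G.mul (G.compl y) (G.compl x) := by
  have h5 := G.ng5 (G.compl x) (G.compl y)
  have hj := G.join_eq_right (G.le_compl_of_mul_eq_zero (G.mul_eq_zero_symm h))
  rw [join] at hj
  rwa [G.ng1 y, hj] at h5

/-- The effect algebra `x ⊕ y = (x'·y')'`, defined when `x·y = 0`. -/
def toEffectAlgebra : EffectAlgebra R where
  D x y := G.mul x y = G.zero
  add x y := G.compl (G.mul (G.compl x) (G.compl y))
  zero := G.zero
  one := G.one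
  compl := G.compl
  E1 x y h := ⟨G.mul_eq_zero_symm h, congrArg G.compl (G.mul_compl_comm h)⟩
  E2 x y z h h' := by
    have h8 := G.ng8 (G.compl x) (G.compl y) (G.compl z)
    simp only [G.ng1] at h8 ⊢
    obtain ⟨h₁, h₂, h₃⟩ := h8 h h'
    exact ⟨h₁, h₂, congrArg G.compl h₃⟩
  E3a := G.mul_compl_self
  E3b x := by rw [G.ng1, G.compl_mul_self, G.ng3]
  E3c x y h h' := by
    have h₀ : G.mul (G.compl x) (G.compl y) = G.zero := by
      rw [← G.compl_one, ← h', G.ng1]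
    exact Le.antisymm G (G.le_compl_of_mul_eq_zero (G.mul_eq_zero_symm h)) h₀
  E4 x h := by rwa [G.ng0r] at h

theorem toEffectAlgebra_le_iff (a b : R) : G.toEffectAlgebra.le a b ↔ G.Le a b := by
  constructor
  · rintro ⟨c, hc, rfl⟩
    change G.mul a c = G.zero at hc
    change G.mul a (G.compl (G.compl (G.mul (G.compl a) (G.compl c)))) = G.zero
    rw [G.ng1, G.mul_compl_comm hc]
    exact G.ng4l _ _
  · intro h
    have hc : G.mul (G.compl a) b = G.mul b (G.compl a) := by
      have := G.mul_compl_comm h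
      rwa [G.ng1] at this
    have h₀ : G.mul a (G.mul (G.compl a) b) = G.zero := by
      rw [hc]
      exact G.ng4l _ _
    refine ⟨G.mul (G.compl a) b, h₀, ?_⟩
    change G.compl (G.mul (G.compl a) (G.compl (G.mul (G.compl a) b))) = b
    rw [G.mul_compl_comm h₀, hc]
    exact (G.join_comm b a).trans (G.join_eq_right h)

/-- The lattice effect algebra of an effect groupoid. -/
def toLatticeEffectAlgebra : LatticeEffectAlgebra R where
  toEffectAlgebra := G.toEffectAlgebra
  inf x y := G.compl (G.join (G.compl x) (G.compl y))
  sup := G.join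
  inf_le_left a b := by
    rw [toEffectAlgebra_le_iff]
    simpa only [G.ng1] using Le.compl G (G.le_join_left (G.compl a) (G.compl b))
  inf_le_right a b := by
    rw [toEffectAlgebra_le_iff]
    simpa only [G.ng1] using Le.compl G (G.le_join_right (G.compl a) (G.compl b))
  le_inf a b c ha hb := by
    rw [toEffectAlgebra_le_iff] at *
    simpa only [G.ng1] using Le.compl G (G.join_le (Le.compl G ha) (Le.compl G hb))
  le_sup_left a b := (G.toEffectAlgebra_le_iff _ _).2 (G.le_join_left a b)
  le_sup_right a b := (G.toEffectAlgebra_le_iff _ _).2 (G.le_join_right a b)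
  sup_le a b c ha hb := by
    rw [toEffectAlgebra_le_iff] at *
    exact G.join_le ha hb

end EffectGroupoid

/-- For an effect groupoid `R` with the partial operation `x⊕y := (x'·y')'` defined
whenever `x·y = 0`, the structure `𝔼(R) := (R;⊕,',0,1)` is a lattice effect algebra
whose induced order coincides with `a ≤ b` iff `a·b' = 0`. -/
theorem effectGroupoid_to_latticeEffectAlgebra {R : Type*} (G : EffectGroupoid R) :
    ∃ A : LatticeEffectAlgebra R,
      (∀ a b, A.D a b ↔ G.mul a b = G.zero) ∧
      (∀ a b, G.mul a b = G.zero →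
        A.add a b = G.compl (G.mul (G.compl a) (G.compl b))) ∧
      A.zero = G.zero ∧ A.one = G.one ∧ A.compl = G.compl ∧
      (∀ a b, A.toEffectAlgebra.le a b ↔ G.mul a (G.compl b) = G.zero) := by
  exact ⟨G.toLatticeEffectAlgebra, fun _ _ => Iff.rfl, fun _ _ _ => rfl, rfl, rfl, rfl,
    G.toEffectAlgebra_le_iff⟩
end

section
/- Let R = (R;·,',0,1) be an effect groupoid. Let 𝔼(R) = (R;⊕,',0,1) be the lattice effect algebra with x⊕y := (x'·y')' defined whenever x·y = 0, with lattice meet ∧, and let ℝ(𝔼(R)) = (R;·₁,',0,1) be the effect groupoid with x·₁y := ((x'∧y)⊕y')'. Then ℝ(𝔼(R)) = R: for all a, b ∈ R, a·₁b = a·b. -/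
/-- `ℝ(𝔼(R)) = R`: for an effect groupoid `R`, with `x⊕y := (x'·y')'` (defined when
`x·y = 0`) and meet `u∧v = (u'·v)'·v` in `𝔼(R)`, the operation
`a·₁b := ((a'∧b)⊕b')'` coincides with `a·b`. -/
theorem round_trip_effect_groupoid {R : Type*} (G : EffectGroupoid R) (a b : R) :
    G.compl (G.compl (G.mul
      (G.compl (G.mul (G.compl (G.mul (G.compl (G.compl a)) b)) b))
      (G.compl (G.compl b)))) = G.mul a b := by
  have h : G.mul (G.compl b) (G.mul a b) = G.zero := by
    simpa only [G.ng1] using G.ng4l (G.compl b) a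
  rw [G.ng1, G.ng1, G.ng1, G.ng6b, h, G.ng3, G.ng0l]
end

section
/- (Completeness) The groupoid-based logic L_LEA for lattice effect algebras is complete with respect to the class of effect groupoids: for all formulas φ, ψ, if for every effect groupoid R = (R;·,',0,1) and every valuation v of the propositional variables in R one has ⟦φ⟧ᵥ ≤ ⟦ψ⟧ᵥ (where a ≤ b means a·b' = 0), then the sequent φ ⊢ ψ is derivable in L_LEA. Equivalently, the Lindenbaum–Tarski quotient of the set of formulas by the relation φ ≡ ψ iff (φ ⊢ ψ and ψ ⊢ φ are derivable), with operations [φ]·[ψ] := [φ·ψ], [φ]' := [¬φ], 0 := [⊥], 1 := [⊤], is well defined and is an effect groupoid. -/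
/-- Formulas of the groupoid-based logic L_LEA over propositional variables `V`. -/
inductive Fml (V : Type*) : Type _ where
  | var : V → Fml V
  | mul : Fml V → Fml V → Fml V
  | neg : Fml V → Fml V
  | bot : Fml V
  | top : Fml V

/-- The abbreviation χ(φ,ψ) := ¬(¬(φ·¬ψ)·¬ψ) used in the rule (mds). -/
def Fml.chi {V : Type*} (φ ψ : Fml V) : Fml V :=
  .neg (.mul (.neg (.mul φ (.neg ψ))) (.neg ψ))

/-- Derivable sequents `φ ⊢ ψ` of the sequent calculus L_LEA. -/
inductive Der {V : Type*} : Fml V → Fml V → Prop where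
  | negr  : ∀ φ ψ, Der φ (.neg ψ) → Der ψ (.neg φ)
  | dn1   : ∀ φ, Der (.neg (.neg φ)) φ
  | dn2   : ∀ φ, Der φ (.neg (.neg φ))
  | itm1  : ∀ φ ψ μ, Der φ ψ → Der ψ φ → Der (.mul φ μ) (.mul ψ μ)
  | itm2  : ∀ φ ψ μ, Der φ ψ → Der ψ φ → Der (.mul μ φ) (.mul μ ψ)
  | mbot  : ∀ φ ψ, Der (.mul φ (.neg ψ)) .bot → Der φ ψ
  | botm  : ∀ φ ψ, Der φ ψ → Der (.mul φ (.neg ψ)) .bot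
  | onel1 : ∀ φ, Der (.mul .top φ) φ
  | onel2 : ∀ φ, Der φ (.mul .top φ)
  | oner1 : ∀ φ, Der (.mul φ .top) φ
  | oner2 : ∀ φ, Der φ (.mul φ .top)
  | zerol1 : ∀ φ, Der (.mul .bot φ) .bot
  | zerol2 : ∀ φ, Der .bot (.mul .bot φ)
  | zeror1 : ∀ φ, Der (.mul φ .bot) .bot
  | zeror2 : ∀ φ, Der .bot (.mul φ .bot)
  | ol1  : ∀ φ ψ, Der .bot (.mul φ (.mul ψ (.neg φ)))
  | ol2  : ∀ φ ψ, Der (.mul φ (.mul ψ (.neg φ))) .bot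
  | or1  : ∀ φ ψ, Der .bot (.mul (.mul ψ (.neg φ)) φ)
  | or2  : ∀ φ ψ, Der (.mul (.mul ψ (.neg φ)) φ) .bot
  | cm1  : ∀ φ ψ, Der (.mul φ (.neg (.mul (.neg ψ) φ))) (.mul (.neg (.mul (.neg ψ) φ)) φ)
  | cm2  : ∀ φ ψ, Der (.mul (.neg (.mul (.neg ψ) φ)) φ) (.mul φ (.neg (.mul (.neg ψ) φ)))
  | mc1  : ∀ φ ψ, Der (.mul (.neg (.mul (.neg ψ) φ)) φ) (.mul (.neg (.mul (.neg φ) ψ)) ψ)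
  | mc2  : ∀ φ ψ, Der (.mul (.neg (.mul (.neg φ) ψ)) ψ) (.mul (.neg (.mul (.neg ψ) φ)) φ)
  | ocm1 : ∀ φ ψ, Der (.mul φ ψ) (.mul ψ (.neg (.mul (.neg (.mul (.neg ψ) (.neg φ))) (.neg φ))))
  | ocm2 : ∀ φ ψ, Der (.mul ψ (.neg (.mul (.neg (.mul (.neg ψ) (.neg φ))) (.neg φ)))) (.mul φ ψ)
  | mds1 : ∀ φ ψ μ, Der (.mul (Fml.chi φ ψ) μ) (Fml.chi (.mul φ μ) (.mul ψ μ))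
  | mds2 : ∀ φ ψ μ, Der (Fml.chi (.mul φ μ) (.mul ψ μ)) (.mul (Fml.chi φ ψ) μ)
  | cut  : ∀ φ ψ χ, Der φ ψ → Der ψ χ → Der φ χ
  | ass1 : ∀ φ ψ μ, Der (.neg φ) ψ → Der (.neg (.mul φ ψ)) μ → Der (.neg ψ) μ
  | ass2 : ∀ φ ψ μ, Der (.neg φ) ψ → Der (.neg (.mul φ ψ)) μ → Der (.neg φ) (.mul ψ μ)
  | ass3a : ∀ φ ψ μ, Der (.neg φ) ψ → Der (.neg (.mul φ ψ)) μ →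
      Der (.mul (.mul φ ψ) μ) (.mul φ (.mul ψ μ))
  | ass3b : ∀ φ ψ μ, Der (.neg φ) ψ → Der (.neg (.mul φ ψ)) μ →
      Der (.mul φ (.mul ψ μ)) (.mul (.mul φ ψ) μ)

/-- Interpretation of a formula in an effect groupoid under a valuation `v`. -/
def interp {V R : Type*} (G : EffectGroupoid R) (v : V → R) : Fml V → R
  | .var p => v p
  | .mul φ ψ => G.mul (interp G v φ) (interp G v ψ)
  | .neg φ => G.compl (interp G v φ)
  | .bot => G.zero
  | .top => G.one

namespace Der

variable {V : Type*} {φ ψ : Fml V}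

theorem refl (φ : Fml V) : Der φ φ :=
  cut _ _ _ (dn2 φ) (dn1 φ)

theorem neg_anti (h : Der φ ψ) : Der (.neg ψ) (.neg φ) :=
  negr _ _ (cut _ _ _ h (dn2 ψ))

theorem bot_le (φ : Fml V) : Der .bot φ :=
  mbot _ _ (zerol1 _)

theorem neg_top_bot : Der (.neg .top : Fml V) .bot :=
  cut _ _ _ (onel2 _) (botm _ _ (refl _))

theorem top_neg_bot : Der (.top : Fml V) (.neg .bot) :=
  negr _ _ (bot_le _)

theorem le_top (φ : Fml V) : Der φ .top :=
  mbot _ _ (cut _ _ _ (itm2 _ _ _ neg_top_bot (bot_le _)) (zeror1 _))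

end Der

/-- Interderivability of formulas. -/
def Fml.interderivable (V : Type*) : Setoid (Fml V) where
  r φ ψ := Der φ ψ ∧ Der ψ φ
  iseqv :=
    { refl := fun φ => ⟨Der.refl φ, Der.refl φ⟩
      symm := fun h => ⟨h.2, h.1⟩
      trans := fun h k => ⟨.cut _ _ _ h.1 k.1, .cut _ _ _ k.2 h.2⟩ }

/-- The Lindenbaum–Tarski quotient of the set of formulas. -/
abbrev Lindenbaum (V : Type*) : Type _ :=
  Quotient (Fml.interderivable V)

namespace Lindenbaum

variable {V : Type*}

/-- The class of a formula. -/
def mk (φ : Fml V) : Lindenbaum V :=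
  Quotient.mk _ φ

theorem mk_eq_mk {φ ψ : Fml V} : mk φ = mk ψ ↔ Der φ ψ ∧ Der ψ φ :=
  Quotient.eq

/-- Multiplication of classes of formulas. -/
def mul : Lindenbaum V → Lindenbaum V → Lindenbaum V :=
  Quotient.map₂ Fml.mul fun _ _ h _ _ k =>
    ⟨.cut _ _ _ (.itm1 _ _ _ h.1 h.2) (.itm2 _ _ _ k.1 k.2),
      .cut _ _ _ (.itm1 _ _ _ h.2 h.1) (.itm2 _ _ _ k.2 k.1)⟩

/-- Negation of classes of formulas. -/
def compl : Lindenbaum V → Lindenbaum V :=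
  Quotient.map Fml.neg fun _ _ h => ⟨h.2.neg_anti, h.1.neg_anti⟩

theorem mul_compl_eq_bot {φ ψ : Fml V} :
    mul (mk φ) (compl (mk ψ)) = mk .bot ↔ Der φ ψ :=
  mk_eq_mk.trans ⟨fun h => .mbot _ _ h.1, fun h => ⟨.botm _ _ h, .bot_le _⟩⟩

/-- The Lindenbaum–Tarski quotient is an effect groupoid. -/
def effectGroupoid (V : Type*) : EffectGroupoid (Lindenbaum V) where
  mul := mul
  compl := compl
  zero := mk .bot
  one := mk .top
  ng0l := by rintro ⟨x⟩; exact mk_eq_mk.2 ⟨.onel1 x, .onel2 x⟩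
  ng0r := by rintro ⟨x⟩; exact mk_eq_mk.2 ⟨.oner1 x, .oner2 x⟩
  ng1 := by rintro ⟨x⟩; exact mk_eq_mk.2 ⟨.dn1 x, .dn2 x⟩
  ng2l := by rintro ⟨x⟩; exact mk_eq_mk.2 ⟨.zerol1 x, .zerol2 x⟩
  ng2r := by rintro ⟨x⟩; exact mk_eq_mk.2 ⟨.zeror1 x, .zeror2 x⟩
  ng3 := mk_eq_mk.2 ⟨.le_top _, .top_neg_bot⟩
  ng4l := by rintro ⟨x⟩ ⟨y⟩; exact mk_eq_mk.2 ⟨.ol2 x y, .ol1 x y⟩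
  ng4r := by rintro ⟨x⟩ ⟨y⟩; exact mk_eq_mk.2 ⟨.or2 x y, .or1 x y⟩
  ng5 := by rintro ⟨x⟩ ⟨y⟩; exact mk_eq_mk.2 ⟨.ocm1 x y, .ocm2 x y⟩
  ng6a := by rintro ⟨x⟩ ⟨y⟩; exact mk_eq_mk.2 ⟨.cm1 x y, .cm2 x y⟩
  ng6b := by rintro ⟨x⟩ ⟨y⟩; exact mk_eq_mk.2 ⟨.mc1 x y, .mc2 x y⟩
  ng7 := by rintro ⟨x⟩ ⟨y⟩ ⟨z⟩; exact mk_eq_mk.2 ⟨.mds1 x y z, .mds2 x y z⟩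
  ng8 := by
    rintro ⟨x⟩ ⟨y⟩ ⟨z⟩ h k
    have hxy : Der (.neg x) y := mul_compl_eq_bot.1 h
    have hxyz : Der (.neg (.mul x y)) z := mul_compl_eq_bot.1 k
    exact ⟨mul_compl_eq_bot.2 (.ass1 x y z hxy hxyz),
      mul_compl_eq_bot.2 (.ass2 x y z hxy hxyz),
      mk_eq_mk.2 ⟨.ass3a x y z hxy hxyz, .ass3b x y z hxy hxyz⟩⟩

theorem interp_effectGroupoid (φ : Fml V) :
    interp (effectGroupoid V) (fun p => mk (.var p)) φ = mk φ := by
  induction φ with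
  | var p => rfl
  | mul φ ψ hφ hψ => rw [interp, hφ, hψ]; rfl
  | neg φ hφ => rw [interp, hφ]; rfl
  | bot => rfl
  | top => rfl

end Lindenbaum

/-- (Completeness) If `⟦φ⟧ᵥ ≤ ⟦ψ⟧ᵥ` (i.e. `⟦φ⟧ᵥ·⟦ψ⟧ᵥ' = 0`) holds in every effect
groupoid `R` under every valuation `v`, then the sequent `φ ⊢ ψ` is derivable
in L_LEA. -/
theorem completeness {V : Type} (φ ψ : Fml V)
    (h : ∀ (R : Type) (G : EffectGroupoid R) (v : V → R),
      G.mul (interp G v φ) (G.compl (interp G v ψ)) = G.zero) :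
    Der φ ψ := by
  have h := h _ (Lindenbaum.effectGroupoid V) fun p => Lindenbaum.mk (.var p)
  rw [Lindenbaum.interp_effectGroupoid, Lindenbaum.interp_effectGroupoid] at h
  exact Lindenbaum.mul_compl_eq_bot.1 h
end
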